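/- arXiv:2309.17194 — 4 statements merged into one kernel-verified Lean document; each statement's English description precedes it below -/
import Mathlib

section
/- Let E = EuclideanSpace ℝ (Fin n), let S ⊆ E be nonempty, closed and convex, and let proj : E → E satisfy: for every z ∈ E, proj(z) ∈ S and ‖z − proj(z)‖ ≤ ‖z − y‖ for all y ∈ S. Let P : E →L[ℝ] E be self-adjoint with ⟪x, P x⟫ > 0 for all x ≠ 0, let q ∈ E, γ > 0, and define f(x) = ½⟪x, P x⟫ + ⟪q, x⟫. Then a point x* ∈ E satisfies proj(x* − γ·(P x* + q)) = x* if and only if x* ∈ S and f(x*) ≤ f(y) for all y ∈ S. -/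
open RealInnerProductSpace

section QuadraticMinimization

variable {E : Type*} [NormedAddCommGroup E] [InnerProductSpace ℝ E]

theorem nonneg_of_forall_mul_add_sq_mul_nonneg {a b : ℝ}
    (h : ∀ t : ℝ, 0 < t → t ≤ 1 → 0 ≤ t * a + t ^ 2 * b) : 0 ≤ a := by
  by_contra! ha
  have hd : 0 < |b| + -a := by linarith [abs_nonneg b]
  obtain ⟨t, ht0, ht1, htb⟩ : ∃ t : ℝ, 0 < t ∧ t ≤ 1 ∧ t * |b| < -a := by
    refine ⟨-a / (|b| + -a), div_pos (by linarith) hd, ?_, ?_⟩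
    · rw [div_le_one hd]
      linarith [abs_nonneg b]
    · rw [div_mul_eq_mul_div, div_lt_iff₀ hd]
      nlinarith [abs_nonneg b]
  have hle : t * b ≤ t * |b| := mul_le_mul_of_nonneg_left (le_abs_self b) ht0.le
  nlinarith [h t ht0 ht1]

/-- Exact second-order expansion of a quadratic objective along a segment. -/
theorem quadratic_add_smul (P : E →ₗ[ℝ] E) (hsym : ∀ x y : E, ⟪P x, y⟫ = ⟪x, P y⟫)
    (q x d : E) (t : ℝ) :
    (1 / 2) * ⟪x + t • d, P (x + t • d)⟫ + ⟪q, x + t • d⟫ =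
      (1 / 2) * ⟪x, P x⟫ + ⟪q, x⟫ + (t * ⟪P x + q, d⟫ + t ^ 2 * ((1 / 2) * ⟪d, P d⟫)) := by
  have hdx : ⟪d, P x⟫ = ⟪P x, d⟫ := real_inner_comm _ _
  simp only [map_add, map_smul, inner_add_left, inner_add_right, real_inner_smul_left,
    real_inner_smul_right, hdx, ← hsym x d]
  ring

/-- First-order optimality condition for a convex quadratic over a convex set. -/
theorem forall_quadratic_le_iff {S : Set E} (hconv : Convex ℝ S) (P : E →ₗ[ℝ] E)
    (hsym : ∀ x y : E, ⟪P x, y⟫ = ⟪x, P y⟫) (hnonneg : ∀ x : E, 0 ≤ ⟪x, P x⟫)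
    (q : E) {x : E} (hx : x ∈ S) :
    (∀ y ∈ S, (1 / 2) * ⟪x, P x⟫ + ⟪q, x⟫ ≤ (1 / 2) * ⟪y, P y⟫ + ⟪q, y⟫) ↔
      ∀ y ∈ S, 0 ≤ ⟪P x + q, y - x⟫ := by
  refine ⟨fun h y hy => ?_, fun h y hy => ?_⟩
  · refine nonneg_of_forall_mul_add_sq_mul_nonneg
      (b := (1 / 2) * ⟪y - x, P (y - x)⟫) fun t ht0 ht1 => ?_
    have hle := h _ (hconv.add_smul_sub_mem hx hy ⟨ht0.le, ht1⟩)
    rw [quadratic_add_smul P hsym] at hle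
    linarith
  · have hexp := quadratic_add_smul P hsym q x (y - x) 1
    rw [one_smul, add_sub_cancel] at hexp
    linarith [h y hy, hnonneg (y - x)]

/-- A metric projection of `z` onto a convex set is characterized by its obtuse-angle condition. -/
theorem eq_iff_mem_and_inner_le_zero_of_forall_norm_sub_le {S : Set E} (hconv : Convex ℝ S)
    {z p : E} (hp : p ∈ S) (hmin : ∀ y ∈ S, ‖z - p‖ ≤ ‖z - y‖) (x : E) :
    p = x ↔ x ∈ S ∧ ∀ y ∈ S, ⟪z - x, y - x⟫ ≤ 0 := by
  have : Nonempty S := ⟨⟨p, hp⟩⟩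
  have hbdd : BddBelow (Set.range fun y : S => ‖z - y‖) :=
    ⟨0, Set.forall_mem_range.mpr fun _ => norm_nonneg _⟩
  have hang : ∀ y ∈ S, ⟪z - p, y - p⟫ ≤ 0 :=
    (norm_eq_iInf_iff_real_inner_le_zero hconv hp).mp
      (le_antisymm (le_ciInf fun y => hmin y y.2) (ciInf_le hbdd ⟨p, hp⟩))
  refine ⟨fun h => h ▸ ⟨hp, hang⟩, fun ⟨hx, h⟩ => ?_⟩
  have hsum : ⟪p - x, p - x⟫ = ⟪z - x, p - x⟫ + ⟪z - p, x - p⟫ := by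
    rw [← neg_sub p x, inner_neg_right, ← sub_eq_add_neg, ← inner_sub_left, sub_sub_sub_cancel_left]
  exact sub_eq_zero.mp (real_inner_self_nonpos.mp (hsum ▸ add_nonpos (h p hp) (hang x hx)))

end QuadraticMinimization

theorem pgd_fixed_point_iff_minimizer (n : ℕ)
    (S : Set (EuclideanSpace ℝ (Fin n))) (hne : S.Nonempty)
    (hclosed : IsClosed S) (hconv : Convex ℝ S)
    (proj : EuclideanSpace ℝ (Fin n) → EuclideanSpace ℝ (Fin n))
    (hproj : ∀ z : EuclideanSpace ℝ (Fin n),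
      proj z ∈ S ∧ ∀ y ∈ S, ‖z - proj z‖ ≤ ‖z - y‖)
    (P : EuclideanSpace ℝ (Fin n) →L[ℝ] EuclideanSpace ℝ (Fin n))
    (hsym : ∀ x y : EuclideanSpace ℝ (Fin n), ⟪P x, y⟫ = ⟪x, P y⟫)
    (hpos : ∀ x : EuclideanSpace ℝ (Fin n), x ≠ 0 → 0 < ⟪x, P x⟫)
    (q : EuclideanSpace ℝ (Fin n)) (γ : ℝ) (hγ : 0 < γ) :
    let f : EuclideanSpace ℝ (Fin n) → ℝ := fun x => (1 / 2) * ⟪x, P x⟫ + ⟪q, x⟫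
    ∀ xstar : EuclideanSpace ℝ (Fin n),
      proj (xstar - γ • (P xstar + q)) = xstar ↔
        xstar ∈ S ∧ ∀ y ∈ S, f xstar ≤ f y := by
  intro f xstar
  have hnonneg : ∀ x, 0 ≤ ⟪x, P x⟫ := fun x => by
    rcases eq_or_ne x 0 with rfl | hx
    · simp
    · exact (hpos x hx).le
  rw [eq_iff_mem_and_inner_le_zero_of_forall_norm_sub_le hconv (hproj _).1 (hproj _).2]
  refine and_congr_right fun hx => ?_
  refine Iff.trans ?_ (forall_quadratic_le_iff hconv P.toLinearMap hsym hnonneg q hx).symm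
  refine forall₂_congr fun y _ => ?_
  rw [sub_sub_cancel_left, inner_neg_left, real_inner_smul_left, neg_nonpos,
    mul_nonneg_iff_of_pos_left hγ]
  rfl
end

section
/- Let E = EuclideanSpace ℝ (Fin n), let S ⊆ E be nonempty, closed and convex, and let proj : E → E satisfy: for every z ∈ E, proj(z) ∈ S and ‖z − proj(z)‖ ≤ ‖z − y‖ for all y ∈ S. Let P : E →L[ℝ] E be self-adjoint, q ∈ E, and γ > 0 with ‖id − γ·P‖ < 1 (operator norm). Define f(x) = ½⟪x, P x⟫ + ⟪q, x⟫ and T(x) = proj((id − γ·P)x − γ·q). Then there exists a unique x* ∈ S with f(x*) ≤ f(y) for all y ∈ S, and for every initial point x⁰ ∈ E the sequence of iterates l ↦ T^[l](x⁰) converges to x* (Tendsto at infinity). -/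
open RealInnerProductSpace

section

variable {F : Type*} [NormedAddCommGroup F] [InnerProductSpace ℝ F]

/-- The variational inequality characterizing a metric projection onto a convex set. -/
theorem inner_sub_le_zero_of_forall_norm_sub_le {S : Set F} (hS : Convex ℝ S) {z p : F}
    (hp : p ∈ S) (hmin : ∀ y ∈ S, ‖z - p‖ ≤ ‖z - y‖) {w : F} (hw : w ∈ S) :
    inner ℝ (z - p) (w - p) ≤ 0 := by
  have : Nonempty S := ⟨⟨p, hp⟩⟩
  refine (norm_eq_iInf_iff_real_inner_le_zero hS hp).1 (le_antisymm ?_ ?_) w hw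
  · exact le_ciInf fun y => hmin y y.2
  · exact ciInf_le (f := fun y : S => ‖z - y‖)
      ⟨0, Set.forall_mem_range.2 fun _ => norm_nonneg _⟩ ⟨p, hp⟩

/-- A metric projection onto a convex set is nonexpansive. -/
theorem norm_proj_sub_proj_le {S : Set F} (hS : Convex ℝ S) {proj : F → F}
    (hproj : ∀ z, proj z ∈ S ∧ ∀ y ∈ S, ‖z - proj z‖ ≤ ‖z - y‖) (u v : F) :
    ‖proj u - proj v‖ ≤ ‖u - v‖ := by
  have hu := inner_sub_le_zero_of_forall_norm_sub_le hS (hproj u).1 (hproj u).2 (hproj v).1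
  have hv := inner_sub_le_zero_of_forall_norm_sub_le hS (hproj v).1 (hproj v).2 (hproj u).1
  have hsum : inner ℝ (u - proj u) (proj v - proj u) + inner ℝ (v - proj v) (proj u - proj v)
      = inner ℝ (proj u - proj v) (proj u - proj v) - inner ℝ (u - v) (proj u - proj v) := by
    simp only [inner_sub_left, inner_sub_right]
    ring
  rw [real_inner_self_eq_norm_sq] at hsum
  have hcs := real_inner_le_norm (u - v) (proj u - proj v)
  by_contra! hlt
  nlinarith [norm_nonneg (u - v)]

theorem inner_apply_self_pos_of_norm_id_sub_smul_lt_one {P : F →L[ℝ] F} {γ : ℝ} (hγ : 0 < γ)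
    (h : ‖ContinuousLinearMap.id ℝ F - γ • P‖ < 1) {d : F} (hd : d ≠ 0) :
    0 < inner ℝ d (P d) := by
  have hcs := real_inner_le_norm d ((ContinuousLinearMap.id ℝ F - γ • P) d)
  have hop := (ContinuousLinearMap.id ℝ F - γ • P).le_opNorm d
  have hexp : inner ℝ d ((ContinuousLinearMap.id ℝ F - γ • P) d)
      = ‖d‖ ^ 2 - γ * inner ℝ d (P d) := by
    simp [inner_sub_right, inner_smul_right]
  have hpos : 0 < ‖d‖ := norm_pos_iff.2 hd
  have hlt : ‖(ContinuousLinearMap.id ℝ F - γ • P) d‖ < ‖d‖ :=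
    hop.trans_lt (mul_lt_of_lt_one_left hpos h)
  refine pos_of_mul_pos_right (a := γ) ?_ hγ.le
  nlinarith

/-- Second-order expansion of a quadratic function with symmetric Hessian. -/
theorem quadratic_sub_eq {P : F →L[ℝ] F} (hP : ∀ x y, inner ℝ (P x) y = inner ℝ x (P y))
    (q x y : F) :
    ((1 / 2) * inner ℝ y (P y) + inner ℝ q y) - ((1 / 2) * inner ℝ x (P x) + inner ℝ q x)
      = inner ℝ (P x + q) (y - x) + (1 / 2) * inner ℝ (y - x) (P (y - x)) := by
  have hxy : inner ℝ y (P x) = inner ℝ x (P y) := by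
    rw [real_inner_comm, hP]
  simp only [inner_sub_left, inner_sub_right, inner_add_left, map_sub, hP, hxy]
  ring

end

theorem pgd_converges_to_unique_minimizer (n : ℕ)
    (S : Set (EuclideanSpace ℝ (Fin n))) (hne : S.Nonempty)
    (hclosed : IsClosed S) (hconv : Convex ℝ S)
    (proj : EuclideanSpace ℝ (Fin n) → EuclideanSpace ℝ (Fin n))
    (hproj : ∀ z : EuclideanSpace ℝ (Fin n),
      proj z ∈ S ∧ ∀ y ∈ S, ‖z - proj z‖ ≤ ‖z - y‖)
    (P : EuclideanSpace ℝ (Fin n) →L[ℝ] EuclideanSpace ℝ (Fin n))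
    (hsym : ∀ x y : EuclideanSpace ℝ (Fin n), ⟪P x, y⟫ = ⟪x, P y⟫)
    (q : EuclideanSpace ℝ (Fin n)) (γ : ℝ) (hγ : 0 < γ)
    (hcontr : ‖ContinuousLinearMap.id ℝ (EuclideanSpace ℝ (Fin n)) - γ • P‖ < 1) :
    let f : EuclideanSpace ℝ (Fin n) → ℝ := fun x => (1 / 2) * ⟪x, P x⟫ + ⟪q, x⟫
    let T : EuclideanSpace ℝ (Fin n) → EuclideanSpace ℝ (Fin n) :=
      fun x => proj ((ContinuousLinearMap.id ℝ (EuclideanSpace ℝ (Fin n)) - γ • P) x - γ • q)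
    ∃ xstar : EuclideanSpace ℝ (Fin n),
      (xstar ∈ S ∧ ∀ y ∈ S, f xstar ≤ f y) ∧
      (∀ x' : EuclideanSpace ℝ (Fin n), x' ∈ S → (∀ y ∈ S, f x' ≤ f y) → x' = xstar) ∧
      ∀ x0 : EuclideanSpace ℝ (Fin n),
        Filter.Tendsto (fun l => T^[l] x0) Filter.atTop (nhds xstar) := by
  intro f T
  set A := ContinuousLinearMap.id ℝ (EuclideanSpace ℝ (Fin n)) - γ • P
  have hT : ContractingWith ‖A‖₊ T := by
    refine ⟨by exact_mod_cast hcontr, LipschitzWith.of_dist_le_mul fun x y => ?_⟩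
    rw [dist_eq_norm, dist_eq_norm, coe_nnnorm]
    refine (norm_proj_sub_proj_le hconv hproj _ _).trans ?_
    rw [sub_sub_sub_cancel_right, ← map_sub]
    exact A.le_opNorm _
  set x := hT.fixedPoint T
  have hx : proj (A x - γ • q) = x := hT.fixedPoint_isFixedPt
  have hxS : x ∈ S := hx ▸ (hproj _).1
  have hgrowth : ∀ y ∈ S, (1 / 2) * ⟪y - x, P (y - x)⟫ ≤ f y - f x := by
    intro y hy
    have hvar := inner_sub_le_zero_of_forall_norm_sub_le hconv (hproj (A x - γ • q)).1
      (hproj (A x - γ • q)).2 hy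
    have hstep : A x - γ • q - x = -(γ • (P x + q)) := by
      simp only [A, sub_apply, ContinuousLinearMap.id_apply, smul_apply, smul_add]
      abel
    rw [hx, hstep, inner_neg_left, real_inner_smul_left] at hvar
    have hgrad : 0 ≤ ⟪P x + q, y - x⟫ :=
      nonneg_of_mul_nonneg_right (by linarith) hγ
    have := quadratic_sub_eq hsym q x y
    simp only [f]
    linarith
  refine ⟨x, ⟨hxS, fun y hy => ?_⟩, fun y hy hmin => ?_, hT.tendsto_iterate_fixedPoint⟩
  · rcases eq_or_ne (y - x) 0 with h | h
    · rw [sub_eq_zero.1 h]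
    · linarith [hgrowth y hy, inner_apply_self_pos_of_norm_id_sub_smul_lt_one hγ hcontr h]
  · by_contra hne'
    linarith [hgrowth y hy, hmin x hxS,
      inner_apply_self_pos_of_norm_id_sub_smul_lt_one hγ hcontr (sub_ne_zero.2 hne')]
end

section
/- Let λ > 0, let g : ℝ → ℝ be convex on ℝ, and let f : ℝ → ℝ be a proximal operator of (λ+1)g, i.e., for every x ∈ ℝ and every y ∈ ℝ, (λ+1)·g(f(x)) + (f(x) − x)²/2 ≤ (λ+1)·g(y) + (y − x)²/2. Define the Moreau envelope M : ℝ → ℝ by M(y) = ⨅_{v ∈ ℝ} ( g(v) + (v − y)²/(2λ) ). Then the Leaky version of f, namely the map x ↦ (f(x) + λ·x)/(λ+1), is a proximal operator of M: for every x ∈ ℝ and every y ∈ ℝ, with p = (f(x) + λ·x)/(λ+1), M(p) + (p − x)²/2 ≤ M(y) + (y − x)²/2. -/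
/-- Splitting a squared distance through an intermediate point `y`, with weights `lam` and `1`. -/
lemma sq_sub_div_add_one_le {lam : ℝ} (hlam : 0 < lam) (v x y : ℝ) :
    (v - x) ^ 2 / (2 * (lam + 1)) ≤ (v - y) ^ 2 / (2 * lam) + (y - x) ^ 2 / 2 := by
  have h : (v - y) ^ 2 / (2 * lam) + (y - x) ^ 2 / 2 - (v - x) ^ 2 / (2 * (lam + 1))
      = (v - y - lam * (y - x)) ^ 2 / (2 * lam * (lam + 1)) := by
    field_simp
    ring
  have : 0 ≤ (v - y - lam * (y - x)) ^ 2 / (2 * lam * (lam + 1)) := by positivity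
  linarith

/-- Equality in `sq_sub_div_add_one_le` at the weighted mean of `v` and `x`. -/
lemma sq_sub_div_add_one_eq {lam : ℝ} (hlam : 0 < lam) (v x : ℝ) :
    (v - (v + lam * x) / (lam + 1)) ^ 2 / (2 * lam) + ((v + lam * x) / (lam + 1) - x) ^ 2 / 2
      = (v - x) ^ 2 / (2 * (lam + 1)) := by
  field_simp
  ring

theorem leaky_prox_is_prox_of_moreau_envelope (lam : ℝ) (hlam : 0 < lam)
    (g : ℝ → ℝ) (hg : ConvexOn ℝ Set.univ g) (f : ℝ → ℝ)
    (hf : ∀ x y : ℝ,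
      (lam + 1) * g (f x) + (f x - x) ^ 2 / 2 ≤ (lam + 1) * g y + (y - x) ^ 2 / 2) :
    let M : ℝ → ℝ := fun y => ⨅ v : ℝ, (g v + (v - y) ^ 2 / (2 * lam))
    ∀ x y : ℝ,
      M ((f x + lam * x) / (lam + 1)) + ((f x + lam * x) / (lam + 1) - x) ^ 2 / 2 ≤
        M y + (y - x) ^ 2 / 2 := by
  intro M x y
  have hscale (v : ℝ) : g v + (v - x) ^ 2 / (2 * (lam + 1))
      = ((lam + 1) * g v + (v - x) ^ 2 / 2) / (lam + 1) := by
    field_simp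
  have hlower (y v : ℝ) : g (f x) + (f x - x) ^ 2 / (2 * (lam + 1)) - (y - x) ^ 2 / 2
      ≤ g v + (v - y) ^ 2 / (2 * lam) := by
    have hmin : g (f x) + (f x - x) ^ 2 / (2 * (lam + 1))
        ≤ g v + (v - x) ^ 2 / (2 * (lam + 1)) := by
      rw [hscale, hscale]
      exact div_le_div_of_nonneg_right (hf x v) (by positivity)
    linarith [sq_sub_div_add_one_le hlam v x y]
  have hbdd (y : ℝ) : BddBelow (Set.range fun v => g v + (v - y) ^ 2 / (2 * lam)) :=
    ⟨_, Set.forall_mem_range.2 (hlower y)⟩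
  have hupper : M ((f x + lam * x) / (lam + 1))
      ≤ g (f x) + (f x - (f x + lam * x) / (lam + 1)) ^ 2 / (2 * lam) :=
    ciInf_le (hbdd _) (f x)
  have hM : g (f x) + (f x - x) ^ 2 / (2 * (lam + 1)) - (y - x) ^ 2 / 2 ≤ M y :=
    le_ciInf (hlower y)
  linarith [sq_sub_div_add_one_eq hlam (f x) x]
end

section
/- Define φ : ℝ → ℝ by φ(y) = y·log(y) + (1−y)·log(1−y) − y²/2 (using the real logarithm), and the sigmoid σ(x) = 1/(1 + exp(−x)). Then for every x ∈ ℝ, σ(x) ∈ (0, 1), and σ(x) minimizes y ↦ φ(y) + ½(y − x)² over the open interval (0, 1): for every y ∈ (0, 1), φ(σ(x)) + (σ(x) − x)²/2 ≤ φ(y) + (y − x)²/2. -/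
theorem mul_log_sub_mul_log_le_sub {y s : ℝ} (hy : 0 < y) (hs : 0 < s) :
    y * Real.log s - y * Real.log y ≤ s - y := by
  have h := mul_le_mul_of_nonneg_left (Real.log_le_sub_one_of_pos (div_pos hs hy)) hy.le
  rw [Real.log_div hs.ne' hy.ne', mul_sub, mul_sub, mul_div_cancel₀ s hy.ne', mul_one] at h
  exact h

/-- Gibbs' inequality for two Bernoulli distributions. -/
theorem bernoulli_gibbs_inequality {y s : ℝ} (hy : y ∈ Set.Ioo (0 : ℝ) 1)
    (hs : s ∈ Set.Ioo (0 : ℝ) 1) :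
    y * Real.log s + (1 - y) * Real.log (1 - s) ≤
      y * Real.log y + (1 - y) * Real.log (1 - y) := by
  have h₁ := mul_log_sub_mul_log_le_sub hy.1 hs.1
  have h₂ := mul_log_sub_mul_log_le_sub (sub_pos.2 hy.2) (sub_pos.2 hs.2)
  linarith

theorem sigmoid_is_prox (x : ℝ) :
    let φ : ℝ → ℝ := fun y => y * Real.log y + (1 - y) * Real.log (1 - y) - y ^ 2 / 2
    let σ : ℝ → ℝ := fun x => 1 / (1 + Real.exp (-x))
    σ x ∈ Set.Ioo (0 : ℝ) 1 ∧
      ∀ y ∈ Set.Ioo (0 : ℝ) 1,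
        φ (σ x) + (σ x - x) ^ 2 / 2 ≤ φ y + (y - x) ^ 2 / 2 := by
  intro φ σ
  have he := Real.exp_pos (-x)
  have hσ : σ x ∈ Set.Ioo (0 : ℝ) 1 :=
    ⟨by positivity, (div_lt_one (by positivity)).2 (by linarith)⟩
  refine ⟨hσ, fun y hy => ?_⟩
  have hlog : Real.log (1 - σ x) = -x + Real.log (σ x) := by
    have h : 1 - σ x = Real.exp (-x) * σ x := by
      simp only [σ]
      field_simp
      ring
    rw [h, Real.log_mul he.ne' hσ.1.ne', Real.log_exp]
  have hgibbs := bernoulli_gibbs_inequality hy hσ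
  simp only [φ]
  rw [hlog] at hgibbs ⊢
  linarith
end
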